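/- arXiv:2007.12987 — 5 statements merged into one kernel-verified Lean document; each statement's English description precedes it below -/
import Mathlib

section
/- Let A be a countable set, let ε ≥ 0, and let μ1, μ2 be probability distributions on A. Then Δ_ε(μ1, μ2) ≤ 0 if and only if μ1 and μ2 are related by the ε-approximate lifting of the equality relation on A, i.e. μ1 (=)^ε μ2. -/
open scoped BigOperators

noncomputable section

/-- Mass that a (sub)distribution assigns to a set of outcomes. -/
def mass {A : Type*} (μ : A → ℝ) (E : Set A) : ℝ := ∑' a : E, μ a

/-- The ε-divergence `Δ_ε(μ1, μ2) = sup_{E ⊆ A} (μ1(E) − exp(ε)·μ2(E))`. -/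
def eDiv {A : Type*} (ε : ℝ) (μ1 μ2 : A → ℝ) : ℝ :=
  ⨆ E : Set A, (mass μ1 E - Real.exp ε * mass μ2 E)

/-- `μ` is a probability distribution: pointwise nonnegative with total mass 1. -/
def IsProb {A : Type*} (μ : A → ℝ) : Prop :=
  (∀ a, 0 ≤ μ a) ∧ (∑' a, μ a) = 1

/-- `μ` is a subdistribution: pointwise nonnegative, summable, with total mass at most 1. -/
def IsSubProb {A : Type*} (μ : A → ℝ) : Prop :=
  (∀ a, 0 ≤ μ a) ∧ Summable μ ∧ (∑' a, μ a) ≤ 1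

/-- ε-approximate lifting `μ1 (Ψ)^ε μ2` of a relation `Ψ` between two
probability distributions. -/
def Lifting {A B : Type*} (ε : ℝ) (Ψ : A → B → Prop) (μ1 : A → ℝ) (μ2 : B → ℝ) : Prop :=
  ∃ μL μR : A × B → ℝ, IsProb μL ∧ IsProb μR ∧
    (∀ a, (∑' b, μL (a, b)) = μ1 a) ∧
    (∀ b, (∑' a, μR (a, b)) = μ2 b) ∧
    (∀ p : A × B, (0 < μL p ∨ 0 < μR p) → Ψ p.1 p.2) ∧
    eDiv ε μL μR ≤ 0

/-- `A` is ε-differentially private w.r.t. the adjacency relation `adj`. -/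
def DP {D O : Type*} (ε : ℝ) (adj : D → D → Prop) (A : D → O → ℝ) : Prop :=
  ∀ d1 d2, adj d1 d2 → ∀ o, A d1 o ≤ Real.exp ε * A d2 o

/-- Monadic bind of distributions: `(bind μ f)(b) = Σ_a μ(a)·f(a)(b)`. -/
def pbind {A B : Type*} (μ : A → ℝ) (f : A → B → ℝ) : B → ℝ :=
  fun b => ∑' a, μ a * f a b

/-- Dirac (point-mass) distribution at `a`. -/
def punit {A : Type*} [DecidableEq A] (a : A) : A → ℝ :=
  fun x => if x = a then 1 else 0

/-- Pushforward of a distribution along `g`: `(map g μ)(b) = Σ_{a : g(a)=b} μ(a)`. -/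
def pmap {A B : Type*} (g : A → B) (μ : A → ℝ) : B → ℝ :=
  fun b => ∑' a : {a // g a = b}, μ (a : A)

/-- Discrete Laplace distribution with mean `v` and (inverse scale) parameter `ε`:
`dLap(v, ε)(z) = ((exp ε − 1)/(exp ε + 1))·exp(−ε·|z − v|)`. -/
def dLap (v : ℤ) (ε : ℝ) : ℤ → ℝ :=
  fun z => ((Real.exp ε - 1) / (Real.exp ε + 1)) * Real.exp (-ε * ((|z - v| : ℤ) : ℝ))

end

/-
Testing the supremum in `eDiv` on singletons shows that `Δ_ε(μ1, μ2) ≤ 0` is the pointwise bound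
`μ1 ≤ exp ε • μ2`. A function on `A × A` supported on the diagonal is determined by either of its
marginals, so the only possible witnesses of a lifting of equality are `μ1` and `μ2` carried to the
diagonal, and there the pointwise bound is the same condition.
-/

section Divergence

variable {A : Type*} {μ μ1 μ2 : A → ℝ}

theorem mass_singleton (μ : A → ℝ) (a : A) : mass μ {a} = μ a :=
  tsum_singleton a μ

theorem mass_sub_const_mul (h1 : Summable μ1) (h2 : Summable μ2) (c : ℝ) (E : Set A) :
    mass (fun a => μ1 a - c * μ2 a) E = mass μ1 E - c * mass μ2 E := by
  rw [mass, mass, mass, ← tsum_mul_left]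
  exact (h1.subtype E).tsum_sub ((h2.subtype E).mul_left c)

theorem bddAbove_range_mass (h : Summable μ) : BddAbove (Set.range (mass μ)) := by
  refine ⟨∑' a, |μ a|, ?_⟩
  rintro _ ⟨E, rfl⟩
  calc mass μ E ≤ ∑' a : E, |μ a| :=
        (h.subtype E).tsum_le_tsum (fun a => le_abs_self (μ a)) (h.abs.subtype E)
    _ ≤ ∑' a, |μ a| := h.abs.tsum_subtype_le _ E fun a => abs_nonneg (μ a)

theorem iSup_mass_nonpos_iff (h : Summable μ) : ⨆ E, mass μ E ≤ 0 ↔ ∀ a, μ a ≤ 0 := by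
  refine ⟨fun hsup a => ?_, fun hμ => ciSup_le fun E => tsum_nonpos fun a => hμ a⟩
  rw [← mass_singleton μ a]
  exact (le_ciSup (bddAbove_range_mass h) {a}).trans hsup

theorem eDiv_nonpos_iff (ε : ℝ) (h1 : Summable μ1) (h2 : Summable μ2) :
    eDiv ε μ1 μ2 ≤ 0 ↔ ∀ a, μ1 a ≤ Real.exp ε * μ2 a := by
  simp only [eDiv, ← mass_sub_const_mul h1 h2]
  rw [iSup_mass_nonpos_iff (h1.sub (h2.mul_left _))]
  simp only [sub_nonpos]

theorem IsProb.summable (h : IsProb μ) : Summable μ :=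
  by_contra fun hns => zero_ne_one ((tsum_eq_zero_of_not_summable hns).symm.trans h.2)

end Divergence

section Diagonal

open Function

variable {A M : Type*} [AddCommMonoid M] [TopologicalSpace M] {f : A × A → M}

theorem tsum_snd_of_support_subset_diagonal (h : support f ⊆ Set.diagonal A) (a : A) :
    ∑' b, f (a, b) = f (a, a) :=
  tsum_eq_single a fun _ hb => notMem_support.1 fun hf => hb (h hf).symm

theorem tsum_fst_of_support_subset_diagonal (h : support f ⊆ Set.diagonal A) (b : A) :
    ∑' a, f (a, b) = f (b, b) :=
  tsum_eq_single b fun _ ha => notMem_support.1 fun hf => ha (h hf)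

theorem tsum_of_support_subset_diagonal (h : support f ⊆ Set.diagonal A) :
    ∑' p, f p = ∑' a, f (a, a) := by
  rw [← Set.range_diag] at h
  exact (diag_injective.tsum_eq h).symm

end Diagonal

section Lifting

variable {A : Type*} {ε : ℝ} {μ μ1 μ2 : A → ℝ}

/-- The push-forward of `μ` along `a ↦ (a, a)`, which couples `μ` with itself. It is written as an
indicator, so that no decidable equality on `A` is needed. -/
noncomputable def diagonalCoupling (μ : A → ℝ) : A × A → ℝ :=
  (Set.diagonal A).indicator fun p => μ p.1

theorem diagonalCoupling_self (μ : A → ℝ) (a : A) : diagonalCoupling μ (a, a) = μ a :=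
  Set.indicator_of_mem (Set.mem_diagonal a) _

theorem support_diagonalCoupling_subset (μ : A → ℝ) :
    Function.support (diagonalCoupling μ) ⊆ Set.diagonal A :=
  Set.support_indicator_subset

theorem tsum_diagonalCoupling_fst (μ : A → ℝ) (b : A) : ∑' a, diagonalCoupling μ (a, b) = μ b :=
  (tsum_fst_of_support_subset_diagonal (support_diagonalCoupling_subset μ) b).trans
    (diagonalCoupling_self μ b)

theorem tsum_diagonalCoupling_snd (μ : A → ℝ) (a : A) : ∑' b, diagonalCoupling μ (a, b) = μ a :=
  (tsum_snd_of_support_subset_diagonal (support_diagonalCoupling_subset μ) a).trans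
    (diagonalCoupling_self μ a)

theorem IsProb.diagonalCoupling (h : IsProb μ) : IsProb (diagonalCoupling μ) := by
  refine ⟨Set.indicator_nonneg fun p _ => h.1 p.1, ?_⟩
  rw [tsum_of_support_subset_diagonal (support_diagonalCoupling_subset μ)]
  simpa only [diagonalCoupling_self] using h.2

theorem diagonalCoupling_le_const_mul {c : ℝ} (h : ∀ a, μ1 a ≤ c * μ2 a) (p : A × A) :
    diagonalCoupling μ1 p ≤ c * diagonalCoupling μ2 p := by
  rw [diagonalCoupling, diagonalCoupling, ← Set.indicator_const_mul]
  exact Set.indicator_le_indicator (h p.1)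

theorem lifting_eq_of_le (h1 : IsProb μ1) (h2 : IsProb μ2)
    (h : ∀ a, μ1 a ≤ Real.exp ε * μ2 a) : Lifting ε (fun a b => a = b) μ1 μ2 := by
  refine ⟨diagonalCoupling μ1, diagonalCoupling μ2, h1.diagonalCoupling, h2.diagonalCoupling,
    tsum_diagonalCoupling_snd μ1, tsum_diagonalCoupling_fst μ2, ?_, ?_⟩
  · rintro p (hp | hp)
    · exact support_diagonalCoupling_subset μ1 hp.ne'
    · exact support_diagonalCoupling_subset μ2 hp.ne'
  · rw [eDiv_nonpos_iff ε h1.diagonalCoupling.summable h2.diagonalCoupling.summable]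
    exact diagonalCoupling_le_const_mul h

theorem Lifting.le_exp_mul (h : Lifting ε (fun a b => a = b) μ1 μ2) (a : A) :
    μ1 a ≤ Real.exp ε * μ2 a := by
  obtain ⟨μL, μR, hL, hR, hfst, hsnd, hsupp, hdiv⟩ := h
  have hL_diag : Function.support μL ⊆ Set.diagonal A := fun p hp =>
    hsupp p (.inl ((hL.1 p).lt_of_ne' hp))
  have hR_diag : Function.support μR ⊆ Set.diagonal A := fun p hp =>
    hsupp p (.inr ((hR.1 p).lt_of_ne' hp))
  rw [← hfst a, ← hsnd a, tsum_snd_of_support_subset_diagonal hL_diag,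
    tsum_fst_of_support_subset_diagonal hR_diag]
  exact (eDiv_nonpos_iff ε hL.summable hR.summable).1 hdiv (a, a)

end Lifting

theorem fundamental_property_of_liftings_general {A : Type*} (ε : ℝ) (μ1 μ2 : A → ℝ)
    (h1 : IsProb μ1) (h2 : IsProb μ2) :
    eDiv ε μ1 μ2 ≤ 0 ↔ Lifting ε (fun a b => a = b) μ1 μ2 := by
  rw [eDiv_nonpos_iff ε h1.summable h2.summable]
  exact ⟨lifting_eq_of_le h1 h2, Lifting.le_exp_mul⟩

/-- Fundamental property of liftings: for probability distributions `μ1, μ2` on a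
countable set `A` and `ε ≥ 0`, `Δ_ε(μ1, μ2) ≤ 0` iff `μ1 (=)^ε μ2`. -/
theorem fundamental_property_of_liftings {A : Type*} [Countable A] (ε : ℝ) (hε : 0 ≤ ε)
    (μ1 μ2 : A → ℝ) (h1 : IsProb μ1) (h2 : IsProb μ2) :
    eDiv ε μ1 μ2 ≤ 0 ↔ Lifting ε (fun a b => a = b) μ1 μ2 :=
  fundamental_property_of_liftings_general ε μ1 μ2 h1 h2
end

section
/- (Laplace mechanism.) Let ε > 0, let ∼ be an adjacency relation on D, and let f : D → ℤ be a k-sensitive function with respect to ∼. Then the randomized algorithm mapping d to f(d) + ν, where ν is sampled from the discrete Laplace distribution dLap(0, ε), is kε-differentially private with respect to ∼. -/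
open scoped BigOperators

theorem pbind_punit {A B : Type*} [DecidableEq B] (μ : A → ℝ) (g : A → B) :
    pbind μ (fun a => punit (g a)) = pmap g μ := by
  funext b
  calc ∑' a, μ a * punit (g a) b
      = ∑' a, {a | g a = b}.indicator μ a := by
        simp only [punit, Set.indicator_apply, Set.mem_ofPred_eq, mul_ite, mul_one, mul_zero,
          @eq_comm _ b]
    _ = pmap g μ b := (tsum_subtype {a | g a = b} μ).symm

theorem pmap_apply_of_injective {A B : Type*} {g : A → B} (hg : Function.Injective g)
    (μ : A → ℝ) (a : A) : pmap g μ (g a) = μ a := by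
  have fiber_eq : {a' | g a' = g a} = {a} := Set.ext fun _ => hg.eq_iff
  calc pmap g μ (g a)
      = ∑' a' : ({a} : Set A), μ a' := tsum_congr_set_coe μ fiber_eq
    _ = μ a := tsum_singleton a μ

theorem pmap_add_left_dLap (a v : ℤ) (ε : ℝ) :
    pmap (a + ·) (dLap v ε) = dLap (a + v) ε := by
  funext z
  calc pmap (a + ·) (dLap v ε) z
      = pmap (a + ·) (dLap v ε) (a + (z - a)) := by rw [add_sub_cancel]
    _ = dLap v ε (z - a) := pmap_apply_of_injective (add_right_injective a) _ _
    _ = dLap (a + v) ε z := by rw [dLap, dLap, sub_sub]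

theorem exp_sub_one_div_exp_add_one_nonneg {ε : ℝ} (hε : 0 ≤ ε) :
    0 ≤ (Real.exp ε - 1) / (Real.exp ε + 1) :=
  div_nonneg (sub_nonneg.2 (Real.one_le_exp hε)) (by positivity)

theorem dLap_nonneg {ε : ℝ} (hε : 0 ≤ ε) (v z : ℤ) : 0 ≤ dLap v ε z :=
  mul_nonneg (exp_sub_one_div_exp_add_one_nonneg hε) (Real.exp_nonneg _)

theorem dLap_le_exp_mul_dLap {ε : ℝ} (hε : 0 ≤ ε) (v w z : ℤ) :
    dLap v ε z ≤ Real.exp (((|v - w| : ℤ) : ℝ) * ε) * dLap w ε z := by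
  have triangle : ((|z - w| : ℤ) : ℝ) ≤ ((|z - v| : ℤ) : ℝ) + ((|v - w| : ℤ) : ℝ) :=
    mod_cast abs_sub_le z v w
  have exponent_le : -ε * ((|z - v| : ℤ) : ℝ) ≤
      ((|v - w| : ℤ) : ℝ) * ε + -ε * ((|z - w| : ℤ) : ℝ) := by
    linarith [mul_le_mul_of_nonneg_left triangle hε]
  rw [dLap, dLap, mul_left_comm, ← Real.exp_add]
  exact mul_le_mul_of_nonneg_left (Real.exp_le_exp.2 exponent_le)
    (exp_sub_one_div_exp_add_one_nonneg hε)

theorem dp_dLap_of_sensitive {D : Type*} {ε : ℝ} (hε : 0 ≤ ε) {adj : D → D → Prop} {k : ℤ}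
    {f : D → ℤ} (hf : ∀ x y, adj x y → |f x - f y| ≤ k) :
    DP (k * ε) adj (fun d => dLap (f d) ε) := by
  intro x y hxy z
  have dist_le : ((|f x - f y| : ℤ) : ℝ) ≤ k := mod_cast hf x y hxy
  calc dLap (f x) ε z
      ≤ Real.exp (((|f x - f y| : ℤ) : ℝ) * ε) * dLap (f y) ε z :=
        dLap_le_exp_mul_dLap hε (f x) (f y) z
    _ ≤ Real.exp (k * ε) * dLap (f y) ε z := by
        gcongr
        exact dLap_nonneg hε (f y) z

/-- The Laplace mechanism: adding discrete Laplace noise `dLap(0, ε)` to a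
`k`-sensitive integer query is `k·ε`-differentially private. -/
theorem laplace_mechanism_dp {D : Type*} (ε : ℝ) (hε : 0 < ε) (adj : D → D → Prop)
    (k : ℤ) (f : D → ℤ) (hsens : ∀ x y, adj x y → |f x - f y| ≤ k) :
    DP ((k : ℝ) * ε) adj (fun d => pbind (dLap 0 ε) (fun ν => punit (f d + ν))) := by
  have mechanism_eq : ∀ d, pbind (dLap 0 ε) (fun ν => punit (f d + ν)) = dLap (f d) ε := by
    intro d
    rw [pbind_punit, pmap_add_left_dLap, add_zero]
  simp only [mechanism_eq]
  exact dp_dLap_of_sensitive hε.le hsens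
end

section
/- (Pointwise ratio bound for the discrete Laplace distribution.) Let ε > 0 and v1, v2 ∈ ℤ. Then for every z ∈ ℤ, dLap(v1, ε)(z) ≤ exp(ε·|v1 − v2|) · dLap(v2, ε)(z). -/
open scoped BigOperators

theorem exp_neg_mul_dist_le {α : Type*} [PseudoMetricSpace α] {ε : ℝ} (hε : 0 ≤ ε) (x y z : α) :
    Real.exp (-ε * dist z x) ≤ Real.exp (ε * dist x y) * Real.exp (-ε * dist z y) := by
  have scaled_triangle : ε * dist z y ≤ ε * (dist z x + dist x y) :=
    mul_le_mul_of_nonneg_left (dist_triangle z x y) hε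
  rw [← Real.exp_add, Real.exp_le_exp]
  linarith

theorem dLap_eq_mul_exp_dist (v : ℤ) (ε : ℝ) (z : ℤ) :
    dLap v ε z = (Real.exp ε - 1) / (Real.exp ε + 1) * Real.exp (-ε * dist z v) := by
  rw [dLap, Int.dist_eq, Int.cast_abs, Int.cast_sub]

/-- Pointwise ratio bound for the discrete Laplace distribution. -/
theorem dLap_ratio_bound (ε : ℝ) (hε : 0 < ε) (v1 v2 : ℤ) (z : ℤ) :
    dLap v1 ε z ≤ Real.exp (ε * ((|v1 - v2| : ℤ) : ℝ)) * dLap v2 ε z := by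
  rw [Int.cast_abs, Int.cast_sub, ← Int.dist_eq]
  calc dLap v1 ε z
    _ = (Real.exp ε - 1) / (Real.exp ε + 1) * Real.exp (-ε * dist z v1) :=
      dLap_eq_mul_exp_dist v1 ε z
    _ ≤ (Real.exp ε - 1) / (Real.exp ε + 1) *
          (Real.exp (ε * dist v1 v2) * Real.exp (-ε * dist z v2)) :=
      mul_le_mul_of_nonneg_left (exp_neg_mul_dist_le hε.le v1 v2 z)
        (exp_sub_one_div_exp_add_one_nonneg hε.le)
    _ = Real.exp (ε * dist v1 v2) * dLap v2 ε z := by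
      rw [dLap_eq_mul_exp_dist, mul_left_comm]
end

section
/- (Normalization of the discrete Laplace distribution.) For every ε > 0 and v ∈ ℤ, the function z ↦ ((exp ε − 1)/(exp ε + 1))·exp(−ε·|z − v|) on ℤ is a probability mass function, i.e. Σ_{z ∈ ℤ} ((exp ε − 1)/(exp ε + 1))·exp(−ε·|z − v|) = 1. -/
open scoped BigOperators

section NormOneClass

variable {E : Type*} [SeminormedAddCommGroup E] [One E] [NormOneClass E] {r : E}

theorem one_sub_ne_zero_of_norm_lt_one (hr : ‖r‖ < 1) : 1 - r ≠ 0 := by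
  refine sub_ne_zero.mpr (ne_of_apply_ne norm ?_)
  rw [norm_one]
  exact hr.ne'

theorem one_add_ne_zero_of_norm_lt_one (hr : ‖r‖ < 1) : 1 + r ≠ 0 := by
  rw [← sub_neg_eq_add]
  exact one_sub_ne_zero_of_norm_lt_one ((norm_neg r).trans_lt hr)

end NormOneClass

section TwoSidedGeometric

variable {K : Type*} [NormedDivisionRing K] {r : K}

theorem hasSum_pow_natAbs (hr : ‖r‖ < 1) :
    HasSum (fun z : ℤ ↦ r ^ z.natAbs) ((1 + r) / (1 - r)) := by
  have nonneg_half : HasSum (fun n : ℕ ↦ r ^ (n : ℤ).natAbs) (1 - r)⁻¹ :=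
    hasSum_geometric_of_norm_lt_one hr
  have nonpos_half : HasSum (fun n : ℕ ↦ r ^ (-(n : ℤ)).natAbs) (1 - r)⁻¹ := by
    simpa only [Int.natAbs_neg] using nonneg_half
  -- Both half-lines contain `0`, so its term has to be subtracted once.
  have sum_eq : (1 - r)⁻¹ + (1 - r)⁻¹ - r ^ (0 : ℤ).natAbs = (1 + r) / (1 - r) := by
    rw [Int.natAbs_zero, pow_zero, eq_div_iff (one_sub_ne_zero_of_norm_lt_one hr), sub_mul,
      add_mul, inv_mul_cancel₀ (one_sub_ne_zero_of_norm_lt_one hr), one_mul]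
    abel
  exact sum_eq ▸ HasSum.of_nat_of_neg (f := fun z : ℤ ↦ r ^ z.natAbs) nonneg_half nonpos_half

/-- At `r = exp (-ε)` the normalizing constant becomes `(exp ε - 1) / (exp ε + 1)`, and the summand
is the discrete Laplace mass function. -/
theorem dLap_tsum_eq_one_general (hr : ‖r‖ < 1) (v : ℤ) :
    ∑' z : ℤ, (1 - r) / (1 + r) * r ^ (z - v).natAbs = 1 := by
  have shifted : HasSum (fun z : ℤ ↦ r ^ (z - v).natAbs) ((1 + r) / (1 - r)) := by
    simpa only [Function.comp_def, Equiv.subRight_apply] using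
      (Equiv.subRight v).hasSum_iff.mpr (hasSum_pow_natAbs hr)
  rw [tsum_mul_left, shifted.tsum_eq,
    div_mul_div_cancel₀ (one_add_ne_zero_of_norm_lt_one hr),
    div_self (one_sub_ne_zero_of_norm_lt_one hr)]

end TwoSidedGeometric

theorem exp_neg_mul_intCast_abs (ε : ℝ) (n : ℤ) :
    Real.exp (-ε * ((|n| : ℤ) : ℝ)) = Real.exp (-ε) ^ n.natAbs := by
  rw [← Real.exp_nat_mul, Nat.cast_natAbs, mul_comm]

theorem exp_sub_one_div_exp_add_one (ε : ℝ) :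
    (Real.exp ε - 1) / (Real.exp ε + 1) = (1 - Real.exp (-ε)) / (1 + Real.exp (-ε)) := by
  rw [Real.exp_neg]
  field_simp

theorem norm_exp_neg_lt_one {ε : ℝ} (hε : 0 < ε) : ‖Real.exp (-ε)‖ < 1 := by
  rwa [Real.norm_of_nonneg (Real.exp_nonneg _), Real.exp_lt_one_iff, neg_lt_zero]

/-- The discrete Laplace density is a probability mass function:
`Σ_{z ∈ ℤ} ((exp ε − 1)/(exp ε + 1))·exp(−ε·|z − v|) = 1`. -/
theorem dLap_tsum_eq_one (ε : ℝ) (hε : 0 < ε) (v : ℤ) :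
    ∑' z : ℤ, ((Real.exp ε - 1) / (Real.exp ε + 1)) * Real.exp (-ε * ((|z - v| : ℤ) : ℝ))
      = 1 := by
  simpa only [exp_sub_one_div_exp_add_one, exp_neg_mul_intCast_abs] using
    dLap_tsum_eq_one_general (norm_exp_neg_lt_one hε) v
end

section
/- (Tightness of the Laplace mechanism; the wrongly calibrated mechanism of Algorithm 1 is not ε-DP.) Let ε > 0 and v1, v2 ∈ ℤ with |v1 − v2| = r. Then there exists z ∈ ℤ such that dLap(v1, ε)(z) = exp(r·ε) · dLap(v2, ε)(z). Consequently, for a query q : D → ℤ and adjacent inputs d1 ∼ d2 with |q(d1) − q(d2)| = r, the mechanism M(d) = q(d) + ν with ν sampled from dLap(0, ε) satisfies: there is an output o ∈ ℤ with Pr[M(d1) = o] = exp(r·ε)·Pr[M(d2) = o]; hence for r > 1, M is not ε'-differentially private for any ε' < r·ε. -/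
open scoped BigOperators

noncomputable section

/-- The (wrongly calibrated) Laplace mechanism of Algorithm 1:
`M(d) = q(d) + ν` with `ν` sampled from `dLap(0, ε)`. -/
def Mech {D : Type*} (ε : ℝ) (q : D → ℤ) (d : D) : ℤ → ℝ :=
  pbind (dLap 0 ε) (fun ν => punit (q d + ν))

end

/-! The ratio `dLap v ε z / dLap w ε z = exp ((|z - w| - |z - v|) * ε)` is bounded by
`exp (|v - w| * ε)` through the triangle inequality, which is an equality at `z = v`. Since adding
`q d` to centred Laplace noise only moves its centre to `q d`, the output `q d1` of the mechanism
attains the extreme ratio, and no smaller privacy parameter is possible. -/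

section

variable {A B D O : Type*}

theorem pbind_punit_apply_of_injective [DecidableEq B] {g : A → B} (hg : g.Injective)
    (μ : A → ℝ) (a : A) : pbind μ (fun x => punit (g x)) (g a) = μ a := by
  simp only [pbind, punit]
  rw [tsum_eq_single a fun x hx => by simp [hg.ne hx.symm]]
  simp

theorem DP.le_of_exp_mul_le {ε c : ℝ} {adj : D → D → Prop} {M : D → O → ℝ} (hM : DP ε adj M)
    {d1 d2 : D} (hadj : adj d1 d2) {o : O} (hpos : 0 < M d2 o)
    (hle : Real.exp c * M d2 o ≤ M d1 o) : c ≤ ε :=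
  Real.exp_le_exp.mp (le_of_mul_le_mul_right (hle.trans (hM d1 d2 hadj o)) hpos)

theorem dLap_pos {ε : ℝ} (hε : 0 < ε) (v z : ℤ) : 0 < dLap v ε z := by
  have hexp : 0 < Real.exp ε - 1 := sub_pos.mpr (Real.one_lt_exp_iff.mpr hε)
  unfold dLap
  positivity

theorem dLap_add_right (v w z : ℤ) (ε : ℝ) : dLap (v + w) ε (z + w) = dLap v ε z := by
  simp only [dLap, add_sub_add_right_eq_sub]

theorem dLap_eq_exp_mul_dLap (v w z : ℤ) (ε : ℝ) :
    dLap v ε z = Real.exp (((|z - w| - |z - v| : ℤ) : ℝ) * ε) * dLap w ε z := by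
  simp only [dLap]
  rw [mul_left_comm, ← Real.exp_add]
  congr 2
  push_cast
  ring

theorem dLap_self_eq_exp_mul_dLap (v w : ℤ) (ε : ℝ) :
    dLap v ε v = Real.exp (((|v - w| : ℤ) : ℝ) * ε) * dLap w ε v := by
  simpa only [sub_self, abs_zero, sub_zero] using dLap_eq_exp_mul_dLap v w v ε

theorem mech_eq_dLap (ε : ℝ) (q : D → ℤ) (d : D) : Mech ε q d = dLap (q d) ε := by
  funext o
  obtain ⟨ν, rfl⟩ : ∃ ν, o = q d + ν := ⟨o - q d, (add_sub_cancel (q d) o).symm⟩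
  calc Mech ε q d (q d + ν)
      = dLap 0 ε ν := pbind_punit_apply_of_injective (add_right_injective (q d)) _ ν
    _ = dLap (q d) ε (q d + ν) := by
      rw [← dLap_add_right 0 (q d), zero_add, add_comm ν]

theorem laplace_mechanism_tight_general (ε : ℝ) (hε : 0 < ε)
    (v1 v2 r : ℤ) (hv : |v1 - v2| = r)
    (adj : D → D → Prop) (q : D → ℤ) (d1 d2 : D) (hadj : adj d1 d2)
    (hq : |q d1 - q d2| = r) :
    (∃ z : ℤ, dLap v1 ε z = Real.exp ((r : ℝ) * ε) * dLap v2 ε z) ∧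
    (∃ o : ℤ, Mech ε q d1 o = Real.exp ((r : ℝ) * ε) * Mech ε q d2 o) ∧
    (∀ ε' : ℝ, ε' < (r : ℝ) * ε → ¬ DP ε' adj (Mech ε q)) := by
  have hout : Mech ε q d1 (q d1) = Real.exp ((r : ℝ) * ε) * Mech ε q d2 (q d1) := by
    simpa only [mech_eq_dLap, hq] using dLap_self_eq_exp_mul_dLap (q d1) (q d2) ε
  have hpos : 0 < Mech ε q d2 (q d1) := mech_eq_dLap ε q d2 ▸ dLap_pos hε (q d2) (q d1)
  exact ⟨⟨v1, hv ▸ dLap_self_eq_exp_mul_dLap v1 v2 ε⟩, ⟨q d1, hout⟩,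
    fun _ hlt hDP => hlt.not_ge (hDP.le_of_exp_mul_le hadj hpos hout.ge)⟩

end

/-- Tightness of the Laplace mechanism: the wrongly calibrated mechanism of
Algorithm 1 is not ε-DP. -/
theorem laplace_mechanism_tight {D : Type*} (ε : ℝ) (hε : 0 < ε)
    (v1 v2 r : ℤ) (hv : |v1 - v2| = r)
    (adj : D → D → Prop) (q : D → ℤ) (d1 d2 : D) (hadj : adj d1 d2)
    (hq : |q d1 - q d2| = r) :
    (∃ z : ℤ, dLap v1 ε z = Real.exp ((r : ℝ) * ε) * dLap v2 ε z) ∧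
    (∃ o : ℤ, Mech ε q d1 o = Real.exp ((r : ℝ) * ε) * Mech ε q d2 o) ∧
    (1 < r → ∀ ε' : ℝ, ε' < (r : ℝ) * ε → ¬ DP ε' adj (Mech ε q)) := by
  obtain ⟨hz, ho, hDP⟩ := laplace_mechanism_tight_general ε hε v1 v2 r hv adj q d1 d2 hadj hq
  exact ⟨hz, ho, fun _ => hDP⟩
end
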